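/- arXiv:math/0511383 — 5 statements merged into one kernel-verified Lean document; each statement's English description precedes it below -/
import Mathlib

section
/- For every real number a and all reals s, t ≥ 0, the function h₀ satisfies the planar linear integral equation h₀(a·s·t) = 1 + a·∫₀^s ∫₀^t h₀(a·u·v) dv du. In other words, g(s,t) = h₀(a·s·t) solves g(s,t) = 1 + a·∫₀^s∫₀^t g(u,v) dv du. -/
/-- The entire function `h₀(x) = ∑_{n≥0} xⁿ/(n!)²`. -/
noncomputable def h₀ (x : ℝ) : ℝ := ∑' n : ℕ, x ^ n / (n.factorial : ℝ) ^ 2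

/-- Termwise integration of an everywhere absolutely convergent real power series. -/
theorem hasSum_integral_powerSeries (c : ℕ → ℝ) (hc : ∀ r : ℝ, Summable fun n => |c n| * |r| ^ n)
    (t : ℝ) :
    HasSum (fun n : ℕ => c n * (t ^ (n + 1) / (n + 1))) (∫ v in (0:ℝ)..t, ∑' n, c n * v ^ n) := by
  have h := intervalIntegral.hasSum_integral_of_dominated_convergence
    (μ := MeasureTheory.volume) (a := 0) (b := t)
    (F := fun n v => c n * v ^ n) (f := fun v => ∑' n, c n * v ^ n)
    (fun n _ => |c n| * |t| ^ n)
    (fun n => (by fun_prop : Continuous fun v : ℝ => c n * v ^ n).aestronglyMeasurable)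
    (fun n => Filter.Eventually.of_forall fun v hv => by
      rw [norm_mul, norm_pow, Real.norm_eq_abs, Real.norm_eq_abs]
      have : |v| ≤ |t| := by
        simpa using Set.abs_sub_left_of_mem_uIcc (Set.uIoc_subset_uIcc hv)
      gcongr)
    (Filter.Eventually.of_forall fun _ _ => hc t)
    intervalIntegrable_const
    (Filter.Eventually.of_forall fun v _ =>
      (Summable.of_norm (by simpa [abs_mul, abs_pow] using hc v)).hasSum)
  simpa [integral_pow] using h

/-- The defining series of `h₀` converges for every argument. -/
theorem summable_pow_div_factorial_sq (x : ℝ) :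
    Summable fun n : ℕ => x ^ n / (n.factorial : ℝ) ^ 2 := by
  refine Summable.of_norm_bounded (Real.summable_pow_div_factorial |x|) fun n => ?_
  have h1 : (1 : ℝ) ≤ n.factorial := by exact_mod_cast n.factorial_pos
  rw [norm_div, norm_pow, norm_pow, Real.norm_eq_abs, Real.norm_natCast]
  gcongr
  nlinarith

/-- The integral of `v ↦ h₀ (b * v)` over `[0, t]`, as a series. -/
theorem hasSum_integral_h₀_mul (b t : ℝ) :
    HasSum (fun n : ℕ => b ^ n / (n.factorial : ℝ) ^ 2 * (t ^ (n + 1) / (n + 1)))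
      (∫ v in (0:ℝ)..t, h₀ (b * v)) := by
  have h := hasSum_integral_powerSeries (fun n => b ^ n / (n.factorial : ℝ) ^ 2)
    (fun r => (summable_pow_div_factorial_sq (|b| * |r|)).congr fun n => by
      rw [abs_div, abs_pow, abs_of_nonneg (by positivity : (0 : ℝ) ≤ (n.factorial : ℝ) ^ 2)]
      ring) t
  convert h using 5 with v n
  unfold h₀
  exact tsum_congr fun n => by ring

/-- The function `g(s,t) = h₀(a·s·t)` solves the planar linear integral equation
`g(s,t) = 1 + a·∫₀^s ∫₀^t g(u,v) dv du`. -/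
theorem stmt_0 (a s t : ℝ) (hs : 0 ≤ s) (ht : 0 ≤ t) :
    h₀ (a * s * t) = 1 + a * ∫ u in (0:ℝ)..s, ∫ v in (0:ℝ)..t, h₀ (a * u * v) := by
  have hinner : ∀ u : ℝ, ∫ v in (0:ℝ)..t, h₀ (a * u * v) =
      ∑' n : ℕ, a ^ n / (n.factorial : ℝ) ^ 2 * (t ^ (n + 1) / (n + 1)) * u ^ n := fun u => by
    rw [← (hasSum_integral_h₀_mul (a * u) t).tsum_eq]
    exact tsum_congr fun n => by ring
  have hsum := hasSum_integral_powerSeries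
    (fun n => a ^ n / (n.factorial : ℝ) ^ 2 * (t ^ (n + 1) / (n + 1)))
    (fun r => by
      refine (hasSum_integral_h₀_mul (a * r) t).summable.abs.congr fun n => ?_
      rw [← abs_pow, ← abs_mul]
      congr 1
      ring) s
  simp_rw [hinner]
  rw [← hsum.tsum_eq, ← tsum_mul_left]
  unfold h₀
  rw [(summable_pow_div_factorial_sq _).tsum_eq_zero_add]
  congr 1
  · simp
  · refine tsum_congr fun n => ?_
    rw [Nat.factorial_succ]
    push_cast
    field_simp
    ring
end

section
/- Let a ∈ ℝ and S, T > 0. If g : [0,S] × [0,T] → ℝ is continuous and satisfies g(s,t) = 1 + a·∫₀^s ∫₀^t g(u,v) dv du for all (s,t) ∈ [0,S] × [0,T], then g(s,t) = h₀(a·s·t) for all (s,t) ∈ [0,S] × [0,T]; that is, the deterministic planar equation admits h₀(a·s·t) as its unique continuous solution. -/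
theorem integral_integral_mul_pow (c s t : ℝ) (n : ℕ) :
    ∫ u in (0:ℝ)..s, ∫ v in (0:ℝ)..t, c * (u * v) ^ n
      = c * (s * t) ^ (n + 1) / ((n : ℝ) + 1) ^ 2 := by
  have hn : (n : ℝ) + 1 ≠ 0 := by positivity
  simp only [mul_pow, intervalIntegral.integral_const_mul, integral_pow,
    intervalIntegral.integral_mul_const]
  field_simp
  simp

theorem continuous_integral_right {f : ℝ × ℝ → ℝ} (hf : Continuous f) (t : ℝ) :
    Continuous fun u : ℝ => ∫ v in (0:ℝ)..t, f (u, v) :=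
  intervalIntegral.continuous_parametric_intervalIntegral_of_continuous'
    (f := fun u v => f (u, v)) hf 0 t

theorem integral_integral_sub {f g : ℝ × ℝ → ℝ} (hf : Continuous f) (hg : Continuous g)
    (s t : ℝ) :
    ∫ u in (0:ℝ)..s, ∫ v in (0:ℝ)..t, (f (u, v) - g (u, v))
      = (∫ u in (0:ℝ)..s, ∫ v in (0:ℝ)..t, f (u, v))
        - ∫ u in (0:ℝ)..s, ∫ v in (0:ℝ)..t, g (u, v) := by
  rw [← intervalIntegral.integral_sub
    ((continuous_integral_right hf t).intervalIntegrable _ _)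
    ((continuous_integral_right hg t).intervalIntegrable _ _)]
  refine intervalIntegral.integral_congr fun u _ => ?_
  exact intervalIntegral.integral_sub
    ((hf.comp (Continuous.prodMk_right u)).intervalIntegrable _ _)
    ((hg.comp (Continuous.prodMk_right u)).intervalIntegrable _ _)

theorem abs_integral_integral_le {f b : ℝ × ℝ → ℝ} (hb : Continuous b)
    {s t : ℝ} (hs : 0 ≤ s) (ht : 0 ≤ t)
    (h : ∀ u v : ℝ, u ∈ Set.Icc 0 s → v ∈ Set.Icc 0 t → |f (u, v)| ≤ b (u, v)) :
    |∫ u in (0:ℝ)..s, ∫ v in (0:ℝ)..t, f (u, v)|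
      ≤ ∫ u in (0:ℝ)..s, ∫ v in (0:ℝ)..t, b (u, v) := by
  rw [← Real.norm_eq_abs]
  refine intervalIntegral.norm_integral_le_of_norm_le hs (.of_forall fun u hu => ?_)
    ((continuous_integral_right hb t).intervalIntegrable _ _)
  refine intervalIntegral.norm_integral_le_of_norm_le ht (.of_forall fun v hv => ?_)
    ((hb.comp (Continuous.prodMk_right u)).intervalIntegrable _ _)
  exact h u v (Set.Ioc_subset_Icc_self hu) (Set.Ioc_subset_Icc_self hv)

/-- The partial sums of the series of `h₀ (a * s * t)` are the Picard iterates of the equation. -/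
theorem sum_range_succ_eq_one_add_integral (a s t : ℝ) (N : ℕ) :
    ∑ n ∈ Finset.range (N + 1), (a * s * t) ^ n / (n.factorial : ℝ) ^ 2
      = 1 + a * ∫ u in (0:ℝ)..s, ∫ v in (0:ℝ)..t,
          ∑ n ∈ Finset.range N, (a * u * v) ^ n / (n.factorial : ℝ) ^ 2 := by
  have hterm : ∀ (n : ℕ) (u v : ℝ), (a * u * v) ^ n / (n.factorial : ℝ) ^ 2
      = a ^ n / (n.factorial : ℝ) ^ 2 * (u * v) ^ n := fun n u v => by
    rw [mul_assoc, mul_pow]; ring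
  simp only [hterm]
  have hinner : ∀ u : ℝ, ∫ v in (0:ℝ)..t,
      ∑ n ∈ Finset.range N, a ^ n / (n.factorial : ℝ) ^ 2 * (u * v) ^ n
      = ∑ n ∈ Finset.range N, ∫ v in (0:ℝ)..t,
          a ^ n / (n.factorial : ℝ) ^ 2 * (u * v) ^ n := fun u =>
    intervalIntegral.integral_finsetSum fun n _ =>
      Continuous.intervalIntegrable (by fun_prop) _ _
  simp only [hinner]
  rw [intervalIntegral.integral_finsetSum fun n _ =>
    (continuous_integral_right (f := fun p => a ^ n / (n.factorial : ℝ) ^ 2 * (p.1 * p.2) ^ n)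
      (by fun_prop) t).intervalIntegrable _ _]
  simp only [integral_integral_mul_pow]
  rw [Finset.sum_range_succ', Finset.mul_sum, add_comm]
  congr 1
  · simp
  · refine Finset.sum_congr rfl fun n _ => ?_
    rw [Nat.factorial_succ]
    push_cast
    have : (n.factorial : ℝ) ≠ 0 := by positivity
    have : (n : ℝ) + 1 ≠ 0 := by positivity
    field_simp
    ring

theorem abs_sub_sum_range_le {a S T M : ℝ} {G : ℝ × ℝ → ℝ} (hG : Continuous G)
    (heq : ∀ s t : ℝ, s ∈ Set.Icc 0 S → t ∈ Set.Icc 0 T →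
      G (s, t) = 1 + a * ∫ u in (0:ℝ)..s, ∫ v in (0:ℝ)..t, G (u, v))
    (hM : ∀ s t : ℝ, s ∈ Set.Icc 0 S → t ∈ Set.Icc 0 T → |G (s, t)| ≤ M) (N : ℕ) :
    ∀ s t : ℝ, s ∈ Set.Icc 0 S → t ∈ Set.Icc 0 T →
      |G (s, t) - ∑ n ∈ Finset.range N, (a * s * t) ^ n / (n.factorial : ℝ) ^ 2|
        ≤ M * |a| ^ N / (N.factorial : ℝ) ^ 2 * (s * t) ^ N := by
  induction N with
  | zero => simpa using hM
  | succ N ih =>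
    intro s t hs ht
    rw [heq s t hs ht, sum_range_succ_eq_one_add_integral, add_sub_add_left_eq_sub, ← mul_sub,
      ← integral_integral_sub hG
        (g := fun p => ∑ n ∈ Finset.range N, (a * p.1 * p.2) ^ n / (n.factorial : ℝ) ^ 2)
        (by fun_prop), abs_mul]
    have hle := abs_integral_integral_le
      (f := fun p => G p - ∑ n ∈ Finset.range N, (a * p.1 * p.2) ^ n / (n.factorial : ℝ) ^ 2)
      (b := fun p => M * |a| ^ N / (N.factorial : ℝ) ^ 2 * (p.1 * p.2) ^ N)
      (by fun_prop) hs.1 ht.1 fun u v hu hv =>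
        ih u v ⟨hu.1, hu.2.trans hs.2⟩ ⟨hv.1, hv.2.trans ht.2⟩
    rw [integral_integral_mul_pow] at hle
    refine (mul_le_mul_of_nonneg_left hle (abs_nonneg a)).trans_eq ?_
    rw [Nat.factorial_succ]
    push_cast
    have : (N.factorial : ℝ) ≠ 0 := by positivity
    have : (N : ℝ) + 1 ≠ 0 := by positivity
    field_simp
    ring

/-- Uniqueness: any continuous solution of the deterministic planar equation
`g(s,t) = 1 + a·∫₀^s ∫₀^t g(u,v) dv du` on `[0,S] × [0,T]` equals `h₀(a·s·t)`. -/
theorem stmt_1 (a S T : ℝ) (hS : 0 < S) (hT : 0 < T) (g : ℝ × ℝ → ℝ)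
    (hg : ContinuousOn g (Set.Icc 0 S ×ˢ Set.Icc 0 T))
    (heq : ∀ s t : ℝ, s ∈ Set.Icc 0 S → t ∈ Set.Icc 0 T →
      g (s, t) = 1 + a * ∫ u in (0:ℝ)..s, ∫ v in (0:ℝ)..t, g (u, v)) :
    ∀ s t : ℝ, s ∈ Set.Icc 0 S → t ∈ Set.Icc 0 T → g (s, t) = h₀ (a * s * t) := by
  obtain ⟨M, hM⟩ := (isCompact_Icc.prod isCompact_Icc).exists_bound_of_continuousOn hg
  -- Extend `g` continuously to the plane by clamping both coordinates.
  let G : ℝ × ℝ → ℝ := fun p =>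
    g (Set.projIcc 0 S hS.le p.1, Set.projIcc 0 T hT.le p.2)
  have hG : Continuous G :=
    hg.comp_continuous (by fun_prop) fun p => ⟨Subtype.coe_prop _, Subtype.coe_prop _⟩
  have hGg : ∀ s t : ℝ, s ∈ Set.Icc 0 S → t ∈ Set.Icc 0 T → G (s, t) = g (s, t) :=
    fun s t hs ht => by simp only [G, Set.projIcc_of_mem _ hs, Set.projIcc_of_mem _ ht]
  have heqG : ∀ s t : ℝ, s ∈ Set.Icc 0 S → t ∈ Set.Icc 0 T →
      G (s, t) = 1 + a * ∫ u in (0:ℝ)..s, ∫ v in (0:ℝ)..t, G (u, v) := by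
    intro s t hs ht
    rw [hGg s t hs ht, heq s t hs ht]
    congr 2
    refine intervalIntegral.integral_congr fun u hu => ?_
    refine intervalIntegral.integral_congr fun v hv => ?_
    rw [Set.uIcc_of_le hs.1] at hu
    rw [Set.uIcc_of_le ht.1] at hv
    exact (hGg u v ⟨hu.1, hu.2.trans hs.2⟩ ⟨hv.1, hv.2.trans ht.2⟩).symm
  have hMG : ∀ s t : ℝ, s ∈ Set.Icc 0 S → t ∈ Set.Icc 0 T → |G (s, t)| ≤ M :=
    fun s t hs ht => by
      rw [hGg s t hs ht]
      exact hM (s, t) ⟨hs, ht⟩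
  intro s t hs ht
  rw [← hGg s t hs ht]
  have hlim := (summable_pow_div_factorial_sq (a * s * t)).hasSum.tendsto_sum_nat
  have hbound : Filter.Tendsto
      (fun N : ℕ => M * |a| ^ N / (N.factorial : ℝ) ^ 2 * (s * t) ^ N)
      Filter.atTop (nhds 0) := by
    have h := (summable_pow_div_factorial_sq (|a| * (s * t))).tendsto_atTop_zero.const_mul M
    rw [mul_zero] at h
    refine h.congr fun N => ?_
    rw [mul_pow]
    ring
  have hsub := squeeze_zero_norm
    (f := fun N => G (s, t) - ∑ n ∈ Finset.range N, (a * s * t) ^ n / (n.factorial : ℝ) ^ 2)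
    (fun N => abs_sub_sum_range_le hG heqG hMG N s t hs ht) hbound
  have hlim' := hsub.add hlim
  simp only [sub_add_cancel, zero_add] at hlim'
  exact tendsto_nhds_unique tendsto_const_nhds hlim'
end

section
/- There exist real numbers 0 < p < q and δ > 0 such that h₀(x) < −δ for every x in the open interval (−q, −p). In particular, the function h₀ takes strictly negative values on a nonempty open interval of negative reals. -/
/-- The terms of `h₀` of index at least `4` are dominated by a geometric sequence
on `[-5/2, 5/2]`. -/
lemma norm_h₀_term_add_four_le {x : ℝ} (hx : |x| ≤ 5 / 2) (n : ℕ) :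
    ‖x ^ (n + 4) / ((n + 4).factorial : ℝ) ^ 2‖ ≤ 625 / 9216 * (1 / 10) ^ n := by
  have hfac : (24 * 5 ^ n : ℝ) ≤ ((n + 4).factorial : ℝ) := by
    have h := Nat.factorial_mul_pow_le_factorial (m := 4) (n := n)
    rw [add_comm 4 n] at h
    exact_mod_cast h
  rw [norm_div, norm_pow, norm_pow, Real.norm_eq_abs, Real.norm_natCast]
  calc |x| ^ (n + 4) / ((n + 4).factorial : ℝ) ^ 2
      ≤ (5 / 2) ^ (n + 4) / (24 * 5 ^ n) ^ 2 := by gcongr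
    _ = 625 / 9216 * ((5 / 2) ^ n / (5 ^ n) ^ 2) := by ring
    _ = 625 / 9216 * (1 / 10) ^ n := by
      rw [← pow_mul, mul_comm n 2, pow_mul, ← div_pow]
      norm_num

/-- `h₀` exceeds its cubic Taylor polynomial by at most `1/10` on `[-5/2, 5/2]`. -/
lemma h₀_le_cubic_add {x : ℝ} (hx : |x| ≤ 5 / 2) :
    h₀ x ≤ 1 + x + x ^ 2 / 4 + x ^ 3 / 36 + 1 / 10 := by
  have hgeom : HasSum (fun n : ℕ ↦ (625 / 9216 * (1 / 10) ^ n : ℝ))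
      (625 / 9216 * (1 - 1 / 10)⁻¹) :=
    (hasSum_geometric_of_lt_one (by norm_num) (by norm_num)).mul_left _
  have htail := tsum_of_norm_bounded hgeom (norm_h₀_term_add_four_le hx)
  have hsum : Summable fun n : ℕ ↦ x ^ n / (n.factorial : ℝ) ^ 2 :=
    (summable_nat_add_iff 4).1
      (Summable.of_norm_bounded hgeom.summable (norm_h₀_term_add_four_le hx))
  rw [h₀, ← hsum.sum_add_tsum_nat_add 4]
  have hle := (Real.le_norm_self _).trans htail
  norm_num [Finset.sum_range_succ, Nat.factorial] at hle ⊢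
  linarith

/-- `h₀` is bounded away from `0` by a negative constant on some open interval
`(−q, −p)` of negative reals. -/
theorem stmt_2 : ∃ p q δ : ℝ, 0 < p ∧ p < q ∧ 0 < δ ∧
    ∀ x ∈ Set.Ioo (-q) (-p), h₀ x < -δ := by
  refine ⟨2, 5 / 2, 1 / 20, by norm_num, by norm_num, by norm_num, ?_⟩
  rintro x ⟨hlo, hhi⟩
  have hbound := h₀_le_cubic_add (x := x) (abs_le.2 ⟨hlo.le, by linarith⟩)
  have hcube : x ^ 3 ≤ -8 := by nlinarith [sq_nonneg (x - 1), sq_nonneg x]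
  have hsq : (1 + x / 2) ^ 2 ≤ 1 / 16 := by nlinarith
  linarith
end

section
/- Fix a, b ∈ ℝ. For n ≥ 0 define f_n(t₁,…,t_n,t) = (aⁿ/n!)·e^{bt}·Π_{j=1}^n 1_{[0,t]}(t_j) (with f₀(t) = e^{bt}). Then for every n ≥ 1, every t ≥ 0 and all pairwise distinct t₁,…,t_n ≥ 0, the recurrence f_n(t₁,…,t_n,t) = (a/n)·Σ_{i=1}^n f_{n−1}(t₁,…,t̂_i,…,t_n, t_i)·1_{[0,t]}(t_i) + b·∫₀^t f_n(t₁,…,t_n,r) dr holds, where t̂_i means that the variable t_i is omitted from the list and the sum (a/n)·Σ_i is the symmetrization in the n variables t₁,…,t_n of a·f_{n−1}(t₁,…,t_{n−1},t_n)·1_{[0,t]}(t_n). (These are the chaos kernels of the one-parameter linear Skorohod equation with drift X_t = 1 + ∫₀^t aX_s δB^α_s + ∫₀^t bX_s ds.) -/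
/-- The indicator function of the interval `[0,r]`. -/
noncomputable def ind (r x : ℝ) : ℝ := if 0 ≤ x ∧ x ≤ r then 1 else 0

/-- The chaos kernels `f_n(t₁,…,t_n,t) = (aⁿ/n!)·e^{bt}·Π_{j=1}^n 1_{[0,t]}(t_j)`
of the one-parameter linear Skorohod equation with drift. -/
noncomputable def f (a b : ℝ) (n : ℕ) (ts : Fin n → ℝ) (t : ℝ) : ℝ :=
  a ^ n / (n.factorial : ℝ) * Real.exp (b * t) * ∏ j : Fin n, ind t (ts j)

open MeasureTheory

/-- A product of indicators `1_{[0,r]}` depends only on the largest argument. -/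
lemma prod_ind_eq_of_forall_le {ι : Type*} [Fintype ι] {ts : ι → ℝ} (hnonneg : ∀ i, 0 ≤ ts i)
    {m : ι} (hm : ∀ i, ts i ≤ ts m) (r : ℝ) :
    ∏ j, ind r (ts j) = ind r (ts m) := by
  by_cases h : ts m ≤ r
  · have hone (j : ι) : ind r (ts j) = 1 := if_pos ⟨hnonneg j, (hm j).trans h⟩
    simp [hone]
  · have hzero : ind r (ts m) = 0 := if_neg fun h' => h h'.2
    rw [hzero]
    exact Finset.prod_eq_zero (Finset.mem_univ m) hzero

/-- Integrating against `r ↦ 1_{[0,r]}(M)` moves the lower limit to `M`. -/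
lemma integral_mul_ind (g : ℝ → ℝ) {M t : ℝ} (hM : 0 ≤ M) (hMt : M ≤ t) :
    ∫ r in (0:ℝ)..t, g r * ind r M = ∫ r in M..t, g r := by
  have hind : (fun r => g r * ind r M) = (Set.Ici M).indicator g := by
    ext r
    simp [ind, hM, Set.indicator_apply]
  have hae : (Set.Ici M).indicator g =ᵐ[volume] (Set.Ioi M).indicator g :=
    indicator_ae_eq_of_ae_eq_set Ioi_ae_eq_Ici.symm
  rw [hind, intervalIntegral.integral_of_le (hM.trans hMt), intervalIntegral.integral_of_le hMt,
    integral_congr_ae (ae_restrict_of_ae hae), setIntegral_indicator measurableSet_Ioi,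
    Set.Ioc_inter_Ioi, max_eq_right hM]

lemma integral_mul_ind_eq_zero (g : ℝ → ℝ) {M t : ℝ} (ht : 0 ≤ t) (htM : t < M) :
    ∫ r in (0:ℝ)..t, g r * ind r M = 0 := by
  refine (intervalIntegral.integral_congr (g := fun _ => 0) fun r hr => ?_).trans (by simp)
  rw [Set.uIcc_of_le ht] at hr
  have hzero : ind r M = 0 := if_neg fun h => (hr.2.trans_lt htM).not_ge h.2
  simp [hzero]

lemma mul_integral_exp_mul (b x y : ℝ) :
    b * ∫ r in x..y, Real.exp (b * r) = Real.exp (b * y) - Real.exp (b * x) := by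
  rw [← intervalIntegral.integral_const_mul]
  refine intervalIntegral.integral_eq_sub_of_hasDerivAt (f := fun r => Real.exp (b * r))
    (fun r _ => ?_) (Continuous.intervalIntegrable (by fun_prop) _ _)
  simpa [mul_comm] using ((hasDerivAt_id r).const_mul b).exp

/-- Only the largest variable contributes to the symmetrized sum. -/
lemma sum_f_mul_ind (a b : ℝ) (n : ℕ) (t : ℝ) {ts : Fin (n + 1) → ℝ}
    (hnonneg : ∀ i, 0 ≤ ts i) (hdist : Function.Injective ts) {m : Fin (n + 1)}
    (hm : ∀ i, ts i ≤ ts m) :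
    ∑ i : Fin (n + 1), f a b n (fun j => ts (i.succAbove j)) (ts i) * ind t (ts i)
      = a ^ n / (n.factorial : ℝ) * Real.exp (b * ts m) * ind t (ts m) := by
  rw [Finset.sum_eq_single m]
  · have hone (j : Fin n) : ind (ts m) (ts (m.succAbove j)) = 1 :=
      if_pos ⟨hnonneg _, hm _⟩
    simp [f, hone]
  · intro i _ hi
    obtain ⟨j, hj⟩ := Fin.exists_succAbove_eq hi.symm
    have hlt : ts i < ts m := lt_of_le_of_ne (hm i) fun h => hi (hdist h)
    have hzero : ind (ts i) (ts (i.succAbove j)) = 0 := by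
      rw [hj]
      exact if_neg fun h => hlt.not_ge h.2
    rw [f, Finset.prod_eq_zero (Finset.mem_univ j) hzero]
    simp
  · simp

/-- The recurrence satisfied by the chaos kernels of the one-parameter linear
Skorohod equation `X_t = 1 + ∫₀^t aX_s δB^α_s + ∫₀^t bX_s ds`: for `n ≥ 1`
(here written with `n+1` in place of `n`), `t ≥ 0` and pairwise distinct
nonnegative `t₁,…,t_{n+1}`,
`f_{n+1}(t₁,…,t_{n+1},t) = (a/(n+1))·Σ_i f_n(t₁,…,t̂_i,…,t_{n+1},t_i)·1_{[0,t]}(t_i)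
  + b·∫₀^t f_{n+1}(t₁,…,t_{n+1},r) dr`. -/
theorem stmt_4 (a b : ℝ) (n : ℕ) (t : ℝ) (ht : 0 ≤ t) (ts : Fin (n + 1) → ℝ)
    (hnonneg : ∀ i, 0 ≤ ts i) (hdist : Function.Injective ts) :
    f a b (n + 1) ts t
      = (a / (n + 1)) *
          ∑ i : Fin (n + 1), f a b n (fun j => ts (i.succAbove j)) (ts i) * ind t (ts i)
        + b * ∫ r in (0:ℝ)..t, f a b (n + 1) ts r := by
  obtain ⟨m, hm⟩ := Finite.exists_max ts
  rw [sum_f_mul_ind a b n t hnonneg hdist hm]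
  simp only [f, prod_ind_eq_of_forall_le hnonneg hm]
  by_cases hmt : ts m ≤ t
  · have hone : ind t (ts m) = 1 := if_pos ⟨hnonneg m, hmt⟩
    rw [integral_mul_ind _ (hnonneg m) hmt, intervalIntegral.integral_const_mul,
      mul_left_comm b, mul_integral_exp_mul, hone, Nat.factorial_succ]
    push_cast
    field_simp
    ring
  · have hzero : ind t (ts m) = 0 := if_neg fun h => hmt h.2
    rw [integral_mul_ind_eq_zero _ ht (not_le.mp hmt), hzero]
    simp
end

section
/- Let α ∈ (1/2, 1) and t > 0. The function u ↦ (t^{1/2−α} − u^{1/2−α})·(t−u)^{−1/2−α} is Lebesgue integrable on (0,t), the constant c(α) := ∫₀^1 (1 − w^{1/2−α})·(1−w)^{−1/2−α} dw is finite, and ∫₀^t (t^{1/2−α} − u^{1/2−α})·(t−u)^{−1/2−α} du = c(α)·t^{1−2α}. (Note that u ↦ (t−u)^{−1/2−α} alone is not integrable near u = t when α > 1/2; the difference structure is essential.) -/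
open MeasureTheory

/-- Since `w ≤ w ^ (α - 1/2)`, the singularity at `w = 1` is weakened by one power. -/
lemma abs_one_sub_rpow_mul_le {α w : ℝ} (hα : α ∈ Set.Ioo (1/2:ℝ) 1)
    (hw : w ∈ Set.Ioo (0:ℝ) 1) :
    |(1 - w ^ ((1/2:ℝ) - α)) * (1 - w) ^ (-(1/2:ℝ) - α)|
      ≤ w ^ (1 - 2 * α) + (1 - w) ^ (1 - 2 * α) := by
  obtain ⟨h1, h2⟩ := hα
  obtain ⟨h3, h4⟩ := hw
  have h5 : 0 < 1 - w := by linarith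
  have hge : 1 ≤ w ^ ((1/2:ℝ) - α) :=
    Real.one_le_rpow_of_pos_of_le_one_of_nonpos h3 h4.le (by linarith)
  have hmul : w ^ ((1/2:ℝ) - α) * w ≤ 1 := by
    rw [← Real.rpow_add_one h3.ne']
    exact Real.rpow_le_one h3.le h4.le (by linarith)
  have hsplit : (1 - w) ^ ((1/2:ℝ) - α) = (1 - w) * (1 - w) ^ (-(1/2:ℝ) - α) := by
    rw [mul_comm, ← Real.rpow_add_one h5.ne']
    ring_nf
  have hsq : ∀ x : ℝ, 0 < x → x ^ (1 - 2 * α) = (x ^ ((1/2:ℝ) - α)) ^ 2 := fun x hx => by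
    rw [← Real.rpow_mul_natCast hx.le]
    push_cast
    ring_nf
  have hpos : 0 < (1 - w) ^ (-(1/2:ℝ) - α) := Real.rpow_pos_of_pos h5 _
  rw [abs_mul, abs_of_pos hpos, abs_of_nonpos (by linarith), hsq w h3, hsq _ h5]
  calc -(1 - w ^ ((1/2:ℝ) - α)) * (1 - w) ^ (-(1/2:ℝ) - α)
      ≤ (w ^ ((1/2:ℝ) - α) * (1 - w)) * (1 - w) ^ (-(1/2:ℝ) - α) := by
        gcongr
        linarith
    _ = w ^ ((1/2:ℝ) - α) * (1 - w) ^ ((1/2:ℝ) - α) := by rw [hsplit]; ring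
    _ ≤ _ := by
        nlinarith [sq_nonneg (w ^ ((1/2:ℝ) - α) - (1 - w) ^ ((1/2:ℝ) - α)),
          sq_nonneg (w ^ ((1/2:ℝ) - α)), sq_nonneg ((1 - w) ^ ((1/2:ℝ) - α))]

lemma intervalIntegrable_one_sub_rpow_mul {α : ℝ} (hα : α ∈ Set.Ioo (1/2:ℝ) 1) :
    IntervalIntegrable (fun w : ℝ => (1 - w ^ ((1/2:ℝ) - α)) * (1 - w) ^ (-(1/2:ℝ) - α))
      volume 0 1 := by
  have hw : IntervalIntegrable (fun w : ℝ => w ^ (1 - 2 * α)) volume 0 1 :=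
    intervalIntegral.intervalIntegrable_rpow' (by linarith [hα.2])
  have hw' : IntervalIntegrable (fun w : ℝ => (1 - w) ^ (1 - 2 * α)) volume 0 1 := by
    simpa using (hw.comp_sub_left 1).symm
  have hbound := hw.add hw'
  rw [intervalIntegrable_iff_integrableOn_Ioo_of_le zero_le_one] at hbound ⊢
  refine hbound.mono' (by fun_prop) ?_
  filter_upwards [ae_restrict_mem measurableSet_Ioo] with w hw
  exact abs_one_sub_rpow_mul_le hα hw

lemma rpow_sub_mul_eq_scaled {α t u : ℝ} (ht : 0 < t) (hu : u ∈ Set.Ioo 0 t) :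
    (t ^ ((1/2:ℝ) - α) - u ^ ((1/2:ℝ) - α)) * (t - u) ^ (-(1/2:ℝ) - α)
      = t ^ (-2 * α) * ((1 - (u / t) ^ ((1/2:ℝ) - α)) * (1 - u / t) ^ (-(1/2:ℝ) - α)) := by
  have hpow : t ^ (-2 * α) = t ^ ((1/2:ℝ) - α) * t ^ (-(1/2:ℝ) - α) := by
    rw [← Real.rpow_add ht]
    ring_nf
  have hsub : 1 - u / t = (t - u) / t := by field_simp
  have h1 := (Real.rpow_pos_of_pos ht ((1/2:ℝ) - α)).ne'
  have h2 := (Real.rpow_pos_of_pos ht (-(1/2:ℝ) - α)).ne'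
  rw [hsub, Real.div_rpow hu.1.le ht.le, Real.div_rpow (by linarith [hu.2]) ht.le, hpow]
  field_simp

/-- For `α ∈ (1/2,1)` and `t > 0`, `u ↦ (t^{1/2−α} − u^{1/2−α})·(t−u)^{−1/2−α}`
is Lebesgue integrable on `(0,t)`, the constant
`c(α) = ∫₀^1 (1 − w^{1/2−α})·(1−w)^{−1/2−α} dw` is finite (the integrand is
integrable on `(0,1)`), and
`∫₀^t (t^{1/2−α} − u^{1/2−α})·(t−u)^{−1/2−α} du = c(α)·t^{1−2α}`. -/
theorem stmt_10 (α t : ℝ) (hα : α ∈ Set.Ioo (1/2:ℝ) 1) (ht : 0 < t) :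
    IntegrableOn
      (fun u : ℝ => (t ^ ((1/2:ℝ) - α) - u ^ ((1/2:ℝ) - α)) * (t - u) ^ (-(1/2:ℝ) - α))
      (Set.Ioo 0 t) ∧
    IntegrableOn
      (fun w : ℝ => (1 - w ^ ((1/2:ℝ) - α)) * (1 - w) ^ (-(1/2:ℝ) - α))
      (Set.Ioo (0:ℝ) 1) ∧
    ∫ u in Set.Ioo 0 t, (t ^ ((1/2:ℝ) - α) - u ^ ((1/2:ℝ) - α)) * (t - u) ^ (-(1/2:ℝ) - α)
      = (∫ w in Set.Ioo (0:ℝ) 1, (1 - w ^ ((1/2:ℝ) - α)) * (1 - w) ^ (-(1/2:ℝ) - α)) *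
          t ^ (1 - 2 * α) := by
  have hint := intervalIntegrable_one_sub_rpow_mul hα
  set f : ℝ → ℝ := fun w => (1 - w ^ ((1/2:ℝ) - α)) * (1 - w) ^ (-(1/2:ℝ) - α) with hf
  have hscale : Set.EqOn
      (fun u : ℝ => (t ^ ((1/2:ℝ) - α) - u ^ ((1/2:ℝ) - α)) * (t - u) ^ (-(1/2:ℝ) - α))
      (fun u => t ^ (-2 * α) * f (u / t)) (Set.Ioo 0 t) :=
    fun u hu => rpow_sub_mul_eq_scaled ht hu
  refine ⟨?_, (intervalIntegrable_iff_integrableOn_Ioo_of_le zero_le_one).mp hint, ?_⟩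
  · rw [integrableOn_congr_fun hscale measurableSet_Ioo,
      ← intervalIntegrable_iff_integrableOn_Ioo_of_le ht.le]
    have hcomp : IntervalIntegrable (fun u => f (u / t)) volume 0 t := by
      simpa [div_eq_mul_inv] using hint.comp_mul_right (c := t⁻¹)
    exact hcomp.const_mul _
  · rw [setIntegral_congr_fun measurableSet_Ioo hscale, ← integral_Ioc_eq_integral_Ioo,
      ← integral_Ioc_eq_integral_Ioo, ← intervalIntegral.integral_of_le ht.le,
      ← intervalIntegral.integral_of_le zero_le_one, intervalIntegral.integral_const_mul,
      intervalIntegral.integral_comp_div f ht.ne', zero_div, div_self ht.ne', smul_eq_mul,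
      show 1 - 2 * α = -2 * α + 1 by ring, Real.rpow_add_one ht.ne']
    ring
end
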